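/- For a permutation σ of length n avoiding 4213, 2413 and 2143, let top(σ) = n − max{k : k is an H-gridding cutoff of σ}. Then the average of top(σ) over all permutations σ of length n avoiding 4213, 2413 and 2143, divided by n, tends to 1/5 as n → ∞; that is, (∑_{σ ∈ Av_n(4213,2413,2143)} top(σ)) / (n · |Av_n(4213,2413,2143)|) → 1/5. -/

import Mathlib

open Filter Topology PowerSeries

/-- `σ` contains the pattern `π`. -/
def PatternContains {n k : ℕ} (σ : Equiv.Perm (Fin n)) (π : Fin k → Fin k) : Prop :=
  ∃ f : Fin k → Fin n, StrictMono f ∧ ∀ a b : Fin k, π a < π b ↔ σ (f a) < σ (f b)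

/-- `σ` avoids the pattern `π`. -/
def PatternAvoids {n k : ℕ} (σ : Equiv.Perm (Fin n)) (π : Fin k → Fin k) : Prop :=
  ¬ PatternContains σ π

/-- The pattern 4213 (zero-indexed values). -/
def p4213 : Fin 4 → Fin 4 := ![3, 1, 0, 2]

/-- The pattern 2413 (zero-indexed values). -/
def p2413 : Fin 4 → Fin 4 := ![1, 3, 0, 2]

/-- The pattern 2143 (zero-indexed values). -/
def p2143 : Fin 4 → Fin 4 := ![1, 0, 3, 2]

/-- The pattern 213 (zero-indexed values). -/
def p213 : Fin 3 → Fin 3 := ![1, 0, 2]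

/-- `σ` avoids 4213, 2413 and 2143. -/
def AvoidsH {n : ℕ} (σ : Equiv.Perm (Fin n)) : Prop :=
  PatternAvoids σ p4213 ∧ PatternAvoids σ p2413 ∧ PatternAvoids σ p2143

/-- `σ` avoids 4213 and 2143. -/
def AvoidsD {n : ℕ} (σ : Equiv.Perm (Fin n)) : Prop :=
  PatternAvoids σ p4213 ∧ PatternAvoids σ p2143

/-- An H-gridding of `σ`: a value cutoff `k ∈ {0,…,n}` such that the subsequence of
entries with (1-based) values `> k` is increasing and the subsequence of entries with
values `≤ k` avoids 213. -/
def HGridding {n : ℕ} (σ : Equiv.Perm (Fin n)) (k : ℕ) : Prop :=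
  k ≤ n ∧
  (∀ i j : Fin n, i < j → k < (σ i : ℕ) + 1 → k < (σ j : ℕ) + 1 → σ i < σ j) ∧
  ¬ ∃ f : Fin 3 → Fin n, StrictMono f ∧ (∀ a, (σ (f a) : ℕ) + 1 ≤ k) ∧
      (∀ a b : Fin 3, p213 a < p213 b ↔ σ (f a) < σ (f b))

/-- A G-gridding of `σ`: a pair `(j, k)` with `0 ≤ j, k ≤ n` such that (i) the first `j`
entries have values `≤ k` and are increasing, (ii) the subsequence of entries at
(1-based) positions `> j` with values `> k` is increasing, and (iii) the subsequence of
entries at positions `> j` with values `≤ k` avoids 213. -/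
def GGridding {n : ℕ} (σ : Equiv.Perm (Fin n)) (j k : ℕ) : Prop :=
  j ≤ n ∧ k ≤ n ∧
  (∀ i : Fin n, (i : ℕ) < j → (σ i : ℕ) + 1 ≤ k) ∧
  (∀ i₁ i₂ : Fin n, i₁ < i₂ → (i₂ : ℕ) < j → σ i₁ < σ i₂) ∧
  (∀ i₁ i₂ : Fin n, i₁ < i₂ → j ≤ (i₁ : ℕ) → k < (σ i₁ : ℕ) + 1 → k < (σ i₂ : ℕ) + 1 →
      σ i₁ < σ i₂) ∧
  ¬ ∃ f : Fin 3 → Fin n, StrictMono f ∧ (∀ a, j ≤ ((f a) : ℕ) ∧ (σ (f a) : ℕ) + 1 ≤ k) ∧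
      (∀ a b : Fin 3, p213 a < p213 b ↔ σ (f a) < σ (f b))

/-- The number of permutations of length `n` avoiding 4213, 2413 and 2143. -/
noncomputable def hCount (n : ℕ) : ℕ :=
  Nat.card {σ : Equiv.Perm (Fin n) // AvoidsH σ}

/-- The number of permutations of length `n` avoiding 4213 and 2143. -/
noncomputable def dCount (n : ℕ) : ℕ :=
  Nat.card {σ : Equiv.Perm (Fin n) // AvoidsD σ}

/-- The minimal number of top points over all H-griddings of `σ`. -/
noncomputable def topPts {n : ℕ} (σ : Equiv.Perm (Fin n)) : ℕ :=
  n - sSup {k | HGridding σ k}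

/-- The minimal number of left points over all G-griddings of `σ`. -/
noncomputable def leftPts {n : ℕ} (σ : Equiv.Perm (Fin n)) : ℕ :=
  sInf {j | ∃ k, GGridding σ j k}

/-!
In a permutation avoiding 4213, 2413 and 2143, the entries playing the role of `3` in an occurrence
of 213 are the largest ones, and they are the top points. Building such permutations by inserting
maxima, a new maximum is a top point exactly when it goes into one of the active gaps, which form a
final interval. Permutations of length `r + s` without top points and with `s` active gaps are
counted by ballot numbers, and `t` top points can then be added in `s.multichoose t` ways.

The identity `(t + 1) * s.multichoose (t + 1) = (s + t) * s.multichoose t` shows that the total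
number of top points in length `n + 1` is `(n + 1) * h n - c n`, where `h` counts the permutations
and `c n` is the coefficient of `X ^ n` in the square of the generating function `∑ h n * X ^ n`.
This generating function is `1 / (1 - X * C (X / (1 - X)))` with `C` the Catalan series. The
recurrence for the coefficients of `C (X / (1 - X))` shows that their successive ratios tend to `5`;
by the Stolz–Cesàro theorem `h (n + 1) / h n` tends to `5` too, while `c n ≤ 2 * h (n + 1)`.
-/

open Asymptotics Equiv Finset Function

/-! ### Occurrences of the patterns -/

theorem forall_lt_iff_lt_iff_strictMono_comp {ι κ α : Type*} [LinearOrder κ] [Preorder α]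
    {π : ι → κ} {ρ : κ → ι} {v : ι → α} (hl : LeftInverse ρ π) (hr : RightInverse ρ π) :
    (∀ a b, π a < π b ↔ v a < v b) ↔ StrictMono (v ∘ ρ) := by
  refine ⟨fun h a b hab => (h _ _).1 (by rwa [hr, hr]), fun h a b => ?_⟩
  simpa only [comp_apply, hl _] using (h.lt_iff_lt (a := π a) (b := π b)).symm

theorem patternContains_iff_strictMono {n k : ℕ} {σ : Perm (Fin n)} {π ρ : Fin k → Fin k}
    (hl : LeftInverse ρ π) (hr : RightInverse ρ π) :
    PatternContains σ π ↔ ∃ f : Fin k → Fin n, StrictMono f ∧ StrictMono (σ ∘ f ∘ ρ) :=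
  exists_congr fun _ => and_congr_right' (forall_lt_iff_lt_iff_strictMono_comp hl hr)

section Patterns

variable {n : ℕ} {σ : Perm (Fin n)}

theorem patternContains_p4213_iff : PatternContains σ p4213 ↔
    ∃ d i j c, d < i ∧ i < j ∧ j < c ∧ σ j < σ i ∧ σ i < σ c ∧ σ c < σ d := by
  rw [patternContains_iff_strictMono (ρ := ![2, 1, 3, 0]) (by decide) (by decide),
    ← FinVec.exists_iff]
  simp [FinVec.Exists, Fin.strictMono_iff_lt_succ, Fin.forall_fin_succ, and_assoc]

theorem patternContains_p2413_iff : PatternContains σ p2413 ↔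
    ∃ i d j c, i < d ∧ d < j ∧ j < c ∧ σ j < σ i ∧ σ i < σ c ∧ σ c < σ d := by
  rw [patternContains_iff_strictMono (ρ := ![2, 0, 3, 1]) (by decide) (by decide),
    ← FinVec.exists_iff]
  simp [FinVec.Exists, Fin.strictMono_iff_lt_succ, Fin.forall_fin_succ, and_assoc]

theorem patternContains_p2143_iff : PatternContains σ p2143 ↔
    ∃ i j d c, i < j ∧ j < d ∧ d < c ∧ σ j < σ i ∧ σ i < σ c ∧ σ c < σ d := by
  rw [patternContains_iff_strictMono (ρ := ![1, 0, 3, 2]) (by decide) (by decide),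
    ← FinVec.exists_iff]
  simp [FinVec.Exists, Fin.strictMono_iff_lt_succ, Fin.forall_fin_succ, and_assoc]

/-- The entry at position `c` plays the role of `3` in an occurrence of 213. In a permutation
avoiding 4213, 2413 and 2143 these entries are the top points, see `topPts_eq_threeCount`. -/
def IsThree (σ : Perm (Fin n)) (c : Fin n) : Prop :=
  ∃ i j, i < j ∧ j < c ∧ σ j < σ i ∧ σ i < σ c

theorem avoidsH_iff : AvoidsH σ ↔ ∀ c d, IsThree σ c → σ c < σ d → c < d := by
  simp only [AvoidsH, PatternAvoids, patternContains_p4213_iff, patternContains_p2413_iff,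
    patternContains_p2143_iff]
  constructor
  · rintro ⟨h4213, h2413, h2143⟩ c d ⟨i, j, hij, hjc, hji, hic⟩ hcd
    by_contra! hdc
    replace hdc : d < c := hdc.lt_of_ne fun h => hcd.ne' (congrArg σ h)
    rcases lt_trichotomy d i with hdi | rfl | hid
    · exact h4213 ⟨d, i, j, c, hdi, hij, hjc, hji, hic, hcd⟩
    · exact (hic.trans hcd).false
    rcases lt_trichotomy d j with hdj | rfl | hjd
    · exact h2413 ⟨i, d, j, c, hid, hdj, hjc, hji, hic, hcd⟩
    · exact (hji.trans (hic.trans hcd)).false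
    · exact h2143 ⟨i, j, d, c, hij, hjd, hdc, hji, hic, hcd⟩
  · refine fun h => ⟨?_, ?_, ?_⟩
    · rintro ⟨d, i, j, c, hdi, hij, hjc, hji, hic, hcd⟩
      exact (h c d ⟨i, j, hij, hjc, hji, hic⟩ hcd).not_gt (hdi.trans (hij.trans hjc))
    · rintro ⟨i, d, j, c, hid, hdj, hjc, hji, hic, hcd⟩
      exact (h c d ⟨i, j, hid.trans hdj, hjc, hji, hic⟩ hcd).not_gt (hdj.trans hjc)
    · rintro ⟨i, j, d, c, hij, hjd, hdc, hji, hic, hcd⟩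
      exact (h c d ⟨i, j, hij, hjd.trans hdc, hji, hic⟩ hcd).not_gt hdc

theorem hGridding_iff {k : ℕ} : HGridding σ k ↔ k ≤ n ∧
    (∀ i j, i < j → k ≤ σ i → k ≤ σ j → σ i < σ j) ∧ ∀ c, IsThree σ c → k ≤ σ c := by
  have h_inv : LeftInverse ![1, 0, 2] p213 := by decide
  have h_213 : (∃ f : Fin 3 → Fin n, StrictMono f ∧ (∀ a, (σ (f a) : ℕ) + 1 ≤ k) ∧
      ∀ a b, p213 a < p213 b ↔ σ (f a) < σ (f b)) ↔
      ∃ i j c, (i < j ∧ j < c) ∧ (σ i < k ∧ σ j < k ∧ σ c < k) ∧ σ j < σ i ∧ σ i < σ c := by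
    refine (exists_congr fun f => and_congr_right' (and_congr_right'
      (forall_lt_iff_lt_iff_strictMono_comp (v := σ ∘ f) h_inv (by decide)))).trans ?_
    rw [← FinVec.exists_iff]
    simp [FinVec.Exists, Fin.strictMono_iff_lt_succ, Fin.forall_fin_succ]
  simp only [HGridding, h_213, Nat.lt_succ_iff, IsThree]
  grind

end Patterns

section TopPoints

variable {n : ℕ} {σ : Perm (Fin n)}

open scoped Classical in
/-- The number of entries playing the role of `3` in an occurrence of 213. -/
noncomputable def threeCount (σ : Perm (Fin n)) : ℕ := #{c | IsThree σ c}

theorem threeCount_le (σ : Perm (Fin n)) : threeCount σ ≤ n :=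
  (card_le_univ _).trans_eq (Fintype.card_fin n)

theorem threeCount_eq_zero_iff : threeCount σ = 0 ↔ ∀ c, ¬ IsThree σ c := by
  simp [threeCount, filter_eq_empty_iff]

theorem mem_iff_le_add_card_of_isUpperSet {m : ℕ} {U : Finset (Fin m)}
    (hU : IsUpperSet (U : Set (Fin m))) (p : Fin m) : p ∈ U ↔ m ≤ p + #U := by
  constructor
  · intro hp
    have := card_le_card fun q hq => hU (mem_Ici.1 hq) hp
    rw [Fin.card_Ici] at this
    lia
  · contrapose!
    intro hp
    have hU' : U ⊆ Ioi p := fun q hq => mem_Ioi.2 <| lt_of_not_ge fun hqp => hp (hU hqp hq)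
    have := card_le_card hU'
    rw [Fin.card_Ioi] at this
    lia

theorem AvoidsH.isThree_of_le (hσ : AvoidsH σ) {c d : Fin n} (hc : IsThree σ c)
    (hcd : σ c ≤ σ d) : IsThree σ d := by
  rcases hcd.eq_or_lt with h | h
  · rwa [← σ.injective h]
  · have hlt := avoidsH_iff.1 hσ c d hc h
    obtain ⟨i, j, hij, hjc, hji, hic⟩ := hc
    exact ⟨i, j, hij, hjc.trans hlt, hji, hic.trans h⟩

theorem AvoidsH.isThree_iff (hσ : AvoidsH σ) {c : Fin n} :
    IsThree σ c ↔ n ≤ σ c + threeCount σ := by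
  classical
  let values : Finset (Fin n) := map σ.toEmbedding {c | IsThree σ c}
  have h_upper : IsUpperSet (values : Set (Fin n)) := by
    intro p q hpq hp
    simp only [values, mem_coe, mem_map_equiv, mem_filter_univ] at hp ⊢
    exact hσ.isThree_of_le hp (by simpa using hpq)
  simpa [values, threeCount] using mem_iff_le_add_card_of_isUpperSet h_upper (σ c)

theorem AvoidsH.isGreatest_hGridding (hσ : AvoidsH σ) :
    IsGreatest {k | HGridding σ k} (n - threeCount σ) := by
  have h_le := threeCount_le σ
  refine ⟨hGridding_iff.2 ⟨Nat.sub_le _ _, fun i j hij _ hj => ?_, fun c hc => ?_⟩,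
    fun k hk => ?_⟩
  · have hj3 : IsThree σ j := hσ.isThree_iff.2 (by lia)
    by_contra! hji
    exact hij.not_gt (avoidsH_iff.1 hσ j i hj3 (hji.lt_of_ne (σ.injective.ne hij.ne')))
  · have := hσ.isThree_iff.1 hc
    lia
  · obtain ⟨hkn, -, hk⟩ := hGridding_iff.1 hk
    by_contra! hlt
    obtain ⟨c, hc⟩ := σ.surjective ⟨n - threeCount σ, by lia⟩
    have := hk c (hσ.isThree_iff.2 (by rw [hc]; lia))
    rw [hc] at this
    lia

theorem AvoidsH.topPts_eq_threeCount (hσ : AvoidsH σ) : topPts σ = threeCount σ := by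
  rw [topPts, hσ.isGreatest_hGridding.csSup_eq, Nat.sub_sub_self (threeCount_le σ)]

end TopPoints

/-! ### Inserting a new maximum -/

section InsertMax

variable {n : ℕ}

/-- The permutation of length `n + 1` obtained from `τ` by inserting a new maximum into the gap
`p`, where gap `p` lies between positions `p - 1` and `p` of `τ`. -/
def insertMax (p : Fin (n + 1)) (τ : Perm (Fin n)) : Perm (Fin (n + 1)) :=
  (finSuccEquiv' p).trans ((optionCongr τ).trans (finSuccEquiv' (Fin.last n)).symm)

theorem insertMax_self (p : Fin (n + 1)) (τ : Perm (Fin n)) :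
    insertMax p τ p = Fin.last n := by
  simp [insertMax]

theorem insertMax_succAbove (p : Fin (n + 1)) (τ : Perm (Fin n)) (i : Fin n) :
    insertMax p τ (p.succAbove i) = (τ i).castSucc := by
  simp [insertMax]

theorem insertMax_lt_insertMax_self {p i : Fin (n + 1)} {τ : Perm (Fin n)} (h : i ≠ p) :
    insertMax p τ i < insertMax p τ p := by
  rw [insertMax_self]
  exact (Fin.le_last _).lt_of_ne (insertMax_self p τ ▸ (insertMax p τ).injective.ne h)

theorem insertMax_bijective (n : ℕ) :
    Bijective fun x : Fin (n + 1) × Perm (Fin n) => insertMax x.1 x.2 := by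
  rw [Fintype.bijective_iff_injective_and_card]
  refine ⟨?_, by simp [Fintype.card_perm, Nat.factorial_succ]⟩
  rintro ⟨p, τ⟩ ⟨q, ρ⟩ (h : insertMax p τ = insertMax q ρ)
  obtain rfl : p = q := (insertMax q ρ).injective (by rw [insertMax_self, ← h, insertMax_self])
  have h_eq (i : Fin n) : τ i = ρ i := Fin.castSucc_injective n <| by
    rw [← insertMax_succAbove p τ, h, insertMax_succAbove]
  rw [Equiv.ext h_eq]

/-- Some descent of `σ` lies entirely to the left of the gap `p`. -/
def IsLate (σ : Perm (Fin n)) (p : Fin (n + 1)) : Prop :=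
  ∃ i j : Fin n, i < j ∧ j.castSucc < p ∧ σ j < σ i

/-- A new maximum inserted into the gap `p` plays the role of `3` in an occurrence of 213 and
stands to the right of all other such entries. -/
def IsActive (σ : Perm (Fin n)) (p : Fin (n + 1)) : Prop :=
  IsLate σ p ∧ ∀ c, IsThree σ c → c.castSucc < p

open scoped Classical in
/-- The number of active gaps of `σ`. -/
noncomputable def activeCount (σ : Perm (Fin n)) : ℕ := #{p | IsActive σ p}

variable {σ τ : Perm (Fin n)} {p q : Fin (n + 1)}

theorem IsThree.isLate {c : Fin n} (h : IsThree σ c) (hp : c.castSucc < p) : IsLate σ p := by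
  obtain ⟨i, j, hij, hjc, hji, -⟩ := h
  exact ⟨i, j, hij, (Fin.castSucc_lt_castSucc_iff.2 hjc).trans hp, hji⟩

theorem IsActive.mono (h : IsActive σ p) (hpq : p ≤ q) : IsActive σ q := by
  obtain ⟨⟨i, j, hij, hjp, hji⟩, hp⟩ := h
  exact ⟨⟨i, j, hij, hjp.trans_le hpq, hji⟩, fun c hc => (hp c hc).trans_le hpq⟩

theorem isActive_iff_lt_activeCount : IsActive σ p ↔ (p.rev : ℕ) < activeCount σ := by
  classical
  have h_upper : IsUpperSet (({p | IsActive σ p} : Finset (Fin (n + 1))) : Set (Fin (n + 1))) :=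
    fun p q hpq hp => by simpa using (mem_filter_univ p |>.1 hp).mono hpq
  rw [← mem_filter_univ (p := IsActive σ), mem_iff_le_add_card_of_isUpperSet h_upper, activeCount,
    Fin.val_rev]
  lia

theorem activeCount_eq_of_isActive_iff (h : ∀ q, IsActive σ q ↔ p < q) :
    activeCount σ = p.rev := by
  simp [activeCount, h, filter_lt_eq_Ioi, Fin.val_rev]

theorem activeCount_le (σ : Perm (Fin n)) : activeCount σ ≤ n := by
  have h : ¬ IsActive σ 0 := fun ⟨⟨_, j, _, hj, _⟩, _⟩ => (Fin.zero_le _).not_gt hj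
  simpa [isActive_iff_lt_activeCount] using h

theorem isThree_insertMax_self : IsThree (insertMax p τ) p ↔ IsLate τ p := by
  constructor
  · rintro ⟨i, j, hij, hjp, hji, -⟩
    obtain ⟨i, rfl⟩ := Fin.exists_succAbove_eq (hij.trans hjp).ne
    obtain ⟨j, rfl⟩ := Fin.exists_succAbove_eq hjp.ne
    simp only [insertMax_succAbove, Fin.castSucc_lt_castSucc_iff, Fin.succAbove_lt_succAbove_iff,
      Fin.succAbove_lt_iff_castSucc_lt] at hij hjp hji
    exact ⟨i, j, hij, hjp, hji⟩
  · rintro ⟨i, j, hij, hjp, hji⟩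
    refine ⟨p.succAbove i, p.succAbove j, ?_⟩
    simpa only [insertMax_succAbove, insertMax_self, Fin.castSucc_lt_castSucc_iff,
      Fin.succAbove_lt_succAbove_iff, Fin.succAbove_lt_iff_castSucc_lt, Fin.castSucc_lt_last,
      and_true] using ⟨hij, hjp, hji⟩

theorem isThree_insertMax_succAbove {c : Fin n} :
    IsThree (insertMax p τ) (p.succAbove c) ↔ IsThree τ c := by
  simp only [IsThree, Fin.exists_iff_succAbove p, insertMax_self, insertMax_succAbove,
    Fin.castSucc_lt_castSucc_iff, Fin.succAbove_lt_succAbove_iff, Fin.castSucc_lt_last,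
    (Fin.le_last _).not_gt, lt_self_iff_false]
  simp

theorem threeCount_insertMax [Decidable (IsLate τ p)] :
    threeCount (insertMax p τ) = threeCount τ + if IsLate τ p then 1 else 0 := by
  classical
  simp only [threeCount, card_filter, Fin.sum_univ_succAbove _ p, isThree_insertMax_self,
    isThree_insertMax_succAbove, add_comm]

theorem avoidsH_insertMax :
    AvoidsH (insertMax p τ) ↔ AvoidsH τ ∧ ∀ c, IsThree τ c → c.castSucc < p := by
  simp only [avoidsH_iff, Fin.forall_iff_succAbove p, isThree_insertMax_succAbove, insertMax_self,
    insertMax_succAbove, Fin.castSucc_lt_castSucc_iff, Fin.succAbove_lt_succAbove_iff,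
    Fin.castSucc_lt_last, Fin.succAbove_lt_iff_castSucc_lt, (Fin.le_last _).not_gt]
  grind

theorem activeCount_insertMax_of_isActive (h : IsActive τ p) :
    activeCount (insertMax p τ) = p.rev + 1 := by
  have hp : IsThree (insertMax p τ) p := isThree_insertMax_self.2 h.1
  rw [activeCount_eq_of_isActive_iff (p := p.castSucc), Fin.rev_castSucc, Fin.val_succ]
  refine fun q => ⟨fun hq => hq.2 p hp, fun hq => ⟨hp.isLate hq, ?_⟩⟩
  refine (Fin.forall_iff_succAbove p).2 ⟨fun _ => hq, fun c hc => lt_trans ?_ hq⟩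
  rw [Fin.castSucc_lt_castSucc_iff, Fin.succAbove_lt_iff_castSucc_lt]
  exact h.2 c (isThree_insertMax_succAbove.1 hc)

theorem isLate_insertMax_iff (h : ¬ IsLate τ p) {q : Fin (n + 2)} :
    IsLate (insertMax p τ) q ↔ p.succ < q := by
  constructor
  · rintro ⟨i, j, hij, hjq, hji⟩
    by_contra! hq
    have hjp : j ≤ p := Fin.castSucc_lt_succ_iff.1 (hjq.trans_le hq)
    have hip : insertMax p τ i < insertMax p τ p :=
      insertMax_lt_insertMax_self (hij.trans_le hjp).ne
    have hjp : j < p := hjp.lt_of_ne fun h => (hji.trans hip).ne (congrArg _ h)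
    exact h (isThree_insertMax_self.1 ⟨i, j, hij, hjp, hji, hip⟩)
  · intro hq
    obtain ⟨j, hj⟩ := Fin.exists_castSucc_eq (i := p.succ).2 (hq.trans_le (Fin.le_last q)).ne
    have hpj : p < j := Fin.castSucc_lt_castSucc_iff.1 (hj ▸ Fin.castSucc_lt_succ)
    exact ⟨p, j, hpj, hj ▸ hq, insertMax_lt_insertMax_self hpj.ne'⟩

theorem activeCount_insertMax_of_not_isLate (hτ : ∀ c, ¬ IsThree τ c) (h : ¬ IsLate τ p) :
    activeCount (insertMax p τ) = p.rev := by
  have h_three : ∀ c, ¬ IsThree (insertMax p τ) c := by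
    simpa only [Fin.forall_iff_succAbove p, isThree_insertMax_self, isThree_insertMax_succAbove]
      using ⟨h, hτ⟩
  rw [activeCount_eq_of_isActive_iff (p := p.succ), Fin.rev_succ, Fin.val_castSucc]
  simp only [IsActive, h_three, isLate_insertMax_iff h, IsEmpty.forall_iff, implies_true, and_true]

end InsertMax

/-! ### The generating tree by levels -/

section Levels

variable {n m : ℕ}

open scoped Classical in
/-- The permutations of length `n` avoiding 4213, 2413 and 2143 in which exactly `m` entries play
the role of `3` in an occurrence of 213. -/
noncomputable def level (n m : ℕ) : Finset (Perm (Fin n)) :=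
  {σ | AvoidsH σ ∧ threeCount σ = m}

theorem mem_level {σ : Perm (Fin n)} : σ ∈ level n m ↔ AvoidsH σ ∧ threeCount σ = m := by
  simp [level]

theorem insertMax_mem_level_succ {p : Fin (n + 1)} {τ : Perm (Fin n)} :
    insertMax p τ ∈ level (n + 1) (m + 1) ↔ τ ∈ level n m ∧ IsActive τ p := by
  classical
  by_cases hp : IsLate τ p
  · simp [mem_level, avoidsH_insertMax, threeCount_insertMax, IsActive, hp, and_right_comm]
  · simp only [mem_level, avoidsH_insertMax, threeCount_insertMax, IsActive, hp]
    have := threeCount_eq_zero_iff (σ := τ)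
    grind [IsThree.isLate]

theorem insertMax_mem_level_zero {p : Fin (n + 1)} {τ : Perm (Fin n)} :
    insertMax p τ ∈ level (n + 1) 0 ↔ τ ∈ level n 0 ∧ ¬ IsActive τ p := by
  classical
  simp only [mem_level, avoidsH_insertMax, threeCount_insertMax, IsActive, Nat.add_eq_zero_iff,
    threeCount_eq_zero_iff]
  grind

variable {M : Type*} [AddCommMonoid M]

theorem sum_eq_sum_sum_insertMax {S : Finset (Perm (Fin (n + 1)))} {T : Finset (Perm (Fin n))}
    {P : Perm (Fin n) → Fin (n + 1) → Prop} [∀ τ, DecidablePred (P τ)]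
    (h : ∀ p τ, insertMax p τ ∈ S ↔ τ ∈ T ∧ P τ p) (f : Perm (Fin (n + 1)) → M) :
    ∑ σ ∈ S, f σ = ∑ τ ∈ T, ∑ p with P τ p, f (insertMax p τ) := by
  classical
  calc ∑ σ ∈ S, f σ
    _ = ∑ τ, ∑ p, if insertMax p τ ∈ S then f (insertMax p τ) else 0 := by
      rw [← Fintype.sum_ite_mem, ← (insertMax_bijective n).sum_comp, Fintype.sum_prod_type,
        sum_comm]
    _ = ∑ τ ∈ T, ∑ p with P τ p, f (insertMax p τ) := by
      simp only [h, ite_and, sum_ite_irrel, sum_const_zero, Fintype.sum_ite_mem, sum_filter]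

theorem sum_filter_rev (n : ℕ) (P : ℕ → Prop) [DecidablePred P] (g : ℕ → M) :
    ∑ p : Fin n with P p.rev, g p.rev = ∑ q ∈ range n with P q, g q := by
  rw [sum_filter, sum_filter, ← Fin.sum_univ_eq_sum_range fun q => if P q then g q else 0]
  exact Equiv.sum_comp Fin.revPerm fun p : Fin n => if P p then g p else 0

theorem sum_activeCount_level_succ (g : ℕ → M) :
    ∑ σ ∈ level (n + 1) (m + 1), g (activeCount σ) =
      ∑ τ ∈ level n m, ∑ q ∈ range (activeCount τ), g (q + 1) := by
  classical
  rw [sum_eq_sum_sum_insertMax fun _ _ => insertMax_mem_level_succ]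
  refine sum_congr rfl fun τ _ => ?_
  calc ∑ p with IsActive τ p, g (activeCount (insertMax p τ))
    _ = ∑ p : Fin (n + 1) with p.rev < activeCount τ, g (p.rev + 1) :=
      sum_congr (by simp only [isActive_iff_lt_activeCount]) fun p hp => by
        rw [activeCount_insertMax_of_isActive (isActive_iff_lt_activeCount.2 (by simpa using hp))]
    _ = ∑ q ∈ range (activeCount τ), g (q + 1) := by
      rw [sum_filter_rev (n + 1) (· < activeCount τ) (g <| · + 1)]
      congr 1
      grind [activeCount_le τ]

theorem sum_activeCount_level_zero (g : ℕ → M) :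
    ∑ σ ∈ level (n + 1) 0, g (activeCount σ) =
      ∑ τ ∈ level n 0, ∑ q ∈ Ico (activeCount τ) (n + 1), g q := by
  classical
  rw [sum_eq_sum_sum_insertMax fun _ _ => insertMax_mem_level_zero]
  refine sum_congr rfl fun τ hτ => ?_
  have h_three := threeCount_eq_zero_iff.1 (mem_level.1 hτ).2
  calc ∑ p with ¬ IsActive τ p, g (activeCount (insertMax p τ))
    _ = ∑ p : Fin (n + 1) with ¬ p.rev < activeCount τ, g p.rev :=
      sum_congr (by simp only [isActive_iff_lt_activeCount]) fun p hp => by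
        have h_late : ¬ IsLate τ p := fun h =>
          (mem_filter.1 hp).2 (isActive_iff_lt_activeCount.1 ⟨h, by simp [h_three]⟩)
        rw [activeCount_insertMax_of_not_isLate h_three h_late]
    _ = ∑ q ∈ Ico (activeCount τ) (n + 1), g q := by
      rw [sum_filter_rev (n + 1) (¬ · < activeCount τ) g]
      congr 1
      grind

theorem level_zero_zero : level 0 0 = univ := by
  refine eq_univ_of_forall fun σ => mem_level.2 ⟨avoidsH_iff.2 fun c => c.elim0, ?_⟩
  exact Nat.le_zero.1 (threeCount_le σ)

end Levels

/-! ### Ballot numbers -/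

section Ballot

/-- The ballot numbers, as coefficients of powers of the Catalan series. They count the
permutations in `level (r + s) 0` with `s` active gaps, see `sum_activeCount_level_zero_eq`. -/
noncomputable def ballot (r s : ℕ) : ℕ := coeff s (catalanSeries ^ r)

theorem ballot_zero_succ (s : ℕ) : ballot 0 (s + 1) = 0 := by
  simp [ballot, coeff_one]

theorem ballot_zero_right (r : ℕ) : ballot r 0 = 1 := by
  simp [ballot]

theorem ballot_succ_succ (r s : ℕ) :
    ballot (r + 1) (s + 1) = ballot r (s + 1) + ballot (r + 2) s := by
  have h : catalanSeries ^ (r + 1) = catalanSeries ^ r + X * catalanSeries ^ (r + 2) := by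
    rw [pow_succ]
    nth_rw 2 [← catalanSeries_sq_mul_X_add_one]
    ring
  rw [ballot, h, map_add, coeff_succ_X_mul, ballot, ballot]

theorem sum_antidiagonal_ballot (r s : ℕ) :
    ∑ x ∈ antidiagonal s, ballot (r + x.1) x.2 = ballot (r + 1) s := by
  induction s generalizing r with
  | zero => simp [ballot_zero_right]
  | succ s ih => simp [Nat.sum_antidiagonal_succ, ballot_succ_succ, ← ih, ← add_assoc,
      add_right_comm]

variable {M : Type*} [AddCommMonoid M]

theorem sum_antidiagonal_assoc (n : ℕ) (f : ℕ → ℕ → ℕ → M) :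
    ∑ x ∈ antidiagonal n, ∑ y ∈ antidiagonal x.1, f y.1 y.2 x.2 =
      ∑ x ∈ antidiagonal n, ∑ y ∈ antidiagonal x.2, f x.1 y.1 y.2 := by
  rw [sum_sigma', sum_sigma']
  refine sum_nbij' (fun x => ⟨(x.2.1, x.2.2 + x.1.2), (x.2.2, x.1.2)⟩)
    (fun x => ⟨(x.1.1 + x.2.1, x.2.2), (x.1.1, x.2.1)⟩) ?_ ?_ ?_ ?_ ?_ <;>
  grind [HasAntidiagonal.mem_antidiagonal]

theorem sum_Ico_eq_sum_antidiagonal (r s : ℕ) (g : ℕ → M) :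
    ∑ q ∈ Ico s (r + s + 1), g q = ∑ x ∈ antidiagonal r, g (x.2 + s) := by
  rw [← Nat.sum_antidiagonal_swap, Nat.sum_antidiagonal_eq_sum_range_succ_mk,
    sum_Ico_eq_sum_range, show r + s + 1 - s = r + 1 by lia]
  simp only [Prod.swap_prod_mk, add_comm s]

theorem sum_activeCount_level_zero_eq (k : ℕ) (g : ℕ → M) :
    ∑ σ ∈ level k 0, g (activeCount σ) = ∑ x ∈ antidiagonal k, ballot x.1 x.2 • g x.2 := by
  induction k generalizing g with
  | zero => simp [level_zero_zero, ballot_zero_right, Nat.le_zero.1 (activeCount_le _)]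
  | succ k ih =>
    calc ∑ σ ∈ level (k + 1) 0, g (activeCount σ)
      _ = ∑ x ∈ antidiagonal k, ballot x.1 x.2 • ∑ q ∈ Ico x.2 (k + 1), g q := by
        rw [sum_activeCount_level_zero, ih fun s => ∑ q ∈ Ico s (k + 1), g q]
      _ = ∑ x ∈ antidiagonal k, ∑ y ∈ antidiagonal x.1,
          ballot (y.1 + y.2) x.2 • g (y.2 + x.2) := by
        refine sum_congr rfl fun x hx => ?_
        obtain rfl := HasAntidiagonal.mem_antidiagonal.1 hx
        rw [sum_Ico_eq_sum_antidiagonal, smul_sum]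
        exact sum_congr rfl fun y hy => by rw [HasAntidiagonal.mem_antidiagonal.1 hy]
      _ = ∑ x ∈ antidiagonal k, ∑ y ∈ antidiagonal x.2,
          ballot (x.1 + y.1) y.2 • g x.2 := by
        rw [sum_antidiagonal_assoc k fun a b s => ballot (a + b) s • g (b + s)]
        refine sum_congr rfl fun x _ => sum_congr rfl fun y hy => ?_
        rw [HasAntidiagonal.mem_antidiagonal.1 hy]
      _ = ∑ x ∈ antidiagonal (k + 1), ballot x.1 x.2 • g x.2 := by
        simp [← sum_smul, sum_antidiagonal_ballot, Nat.sum_antidiagonal_succ, ballot_zero_succ]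

end Ballot

section Multichoose

theorem sum_multichoose_succ (s j : ℕ) :
    ∑ q ∈ range s, (q + 1).multichoose j = s.multichoose (j + 1) := by
  induction s with
  | zero => simp
  | succ s ih => rw [sum_range_succ, ih, Nat.multichoose_succ_succ]

theorem multichoose_succ_mul (s t : ℕ) :
    (t + 1) * s.multichoose (t + 1) = (s + t) * s.multichoose t := by
  rcases s with - | s
  · cases t <;> simp
  · have := Nat.add_one_mul_choose_eq (s + t) t
    grind [Nat.multichoose_eq]

theorem sum_multichoose_activeCount_level (n m j : ℕ) :
    ∑ σ ∈ level (n + m) m, (activeCount σ).multichoose j =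
      ∑ σ ∈ level n 0, (activeCount σ).multichoose (j + m) := by
  induction m generalizing j with
  | zero => rfl
  | succ m ih =>
    rw [← add_assoc, sum_activeCount_level_succ (·.multichoose j)]
    simp only [sum_multichoose_succ]
    rw [ih, add_right_comm, add_assoc]

theorem card_level (k m : ℕ) :
    #(level (k + m) m) = ∑ x ∈ antidiagonal k, ballot x.1 x.2 * x.2.multichoose m := by
  have := sum_multichoose_activeCount_level k m 0
  simp only [Nat.multichoose_zero_right, zero_add] at this
  rw [card_eq_sum_ones, this, sum_activeCount_level_zero_eq k (·.multichoose m)]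
  rfl

open scoped Classical in
theorem sum_threeCount (n : ℕ) (φ : ℕ → ℕ) :
    ∑ σ : Perm (Fin n) with AvoidsH σ, φ (threeCount σ) =
      ∑ x ∈ antidiagonal n, ∑ y ∈ antidiagonal x.1,
        φ x.2 * (ballot y.1 y.2 * y.2.multichoose x.2) := by
  rw [← sum_fiberwise_of_maps_to (t := antidiagonal n)
    (g := fun σ => (n - threeCount σ, threeCount σ)) (by simp [threeCount_le])]
  refine sum_congr rfl fun x hx => ?_
  obtain rfl := HasAntidiagonal.mem_antidiagonal.1 hx
  have h_filter : {σ ∈ ({σ | AvoidsH σ} : Finset (Perm (Fin (x.1 + x.2)))) |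
      (x.1 + x.2 - threeCount σ, threeCount σ) = x} = level (x.1 + x.2) x.2 := by
    ext σ
    simp only [filter_filter, mem_filter_univ, mem_level]
    grind
  rw [h_filter, ← mul_sum, ← card_level, sum_congr rfl fun σ hσ => by rw [(mem_level.1 hσ).2],
    sum_const, smul_eq_mul, mul_comm]

theorem hCount_eq_sum (n : ℕ) : hCount n = ∑ x ∈ antidiagonal n, ∑ y ∈ antidiagonal x.1,
    ballot y.1 y.2 * y.2.multichoose x.2 := by
  classical
  simpa [hCount, Nat.card_eq_fintype_card, Fintype.card_subtype] using sum_threeCount n fun _ => 1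

open scoped Classical in
theorem sum_topPts_succ_add (n : ℕ) :
    (∑ σ : Perm (Fin (n + 1)) with AvoidsH σ, topPts σ) +
      ∑ x ∈ antidiagonal n, ∑ y ∈ antidiagonal x.1,
        (y.1 + 1) * (ballot y.1 y.2 * y.2.multichoose x.2) = (n + 1) * hCount n := by
  have h_three : ∑ σ : Perm (Fin (n + 1)) with AvoidsH σ, topPts σ =
      ∑ σ : Perm (Fin (n + 1)) with AvoidsH σ, threeCount σ :=
    sum_congr rfl fun σ hσ => (mem_filter.1 hσ).2.topPts_eq_threeCount
  rw [h_three, sum_threeCount (n + 1) fun t => t, Nat.sum_antidiagonal_succ', hCount_eq_sum,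
    mul_sum]
  simp only [zero_mul, sum_const_zero, zero_add, ← sum_add_distrib, mul_sum]
  refine sum_congr rfl fun x hx => sum_congr rfl fun y hy => ?_
  have := multichoose_succ_mul y.2 x.2
  have hx := HasAntidiagonal.mem_antidiagonal.1 hx
  have hy := HasAntidiagonal.mem_antidiagonal.1 hy
  rw [← hx, ← hy]
  linear_combination ballot y.1 y.2 * this

end Multichoose

/-! ### Generating functions -/

section Series

variable {R : Type*} [CommRing R]

theorem hasSubst_X_mul (g : R⟦X⟧) : HasSubst (X * g) :=
  HasSubst.of_constantCoeff_zero' (by simp)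

theorem coeff_subst_X_mul (f g : R⟦X⟧) (n : ℕ) :
    coeff n (f.subst (X * g)) = ∑ x ∈ antidiagonal n, coeff x.1 f * coeff x.2 (g ^ x.1) := by
  have h_coeff (i : ℕ) :
      coeff n ((X * g) ^ i) = if i ≤ n then coeff (n - i) (g ^ i) else 0 := by
    rw [mul_pow, coeff_X_pow_mul']
  rw [coeff_subst' (hasSubst_X_mul g), finsum_eq_sum_of_support_subset (s := range (n + 1)),
    Nat.sum_antidiagonal_eq_sum_range_succ_mk]
  · exact sum_congr rfl fun i hi => by
      rw [h_coeff, if_pos (mem_range_succ_iff.1 hi), smul_eq_mul]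
  · refine support_subset_iff'.2 fun i hi => ?_
    rw [h_coeff, if_neg (by simpa using hi), smul_zero]

theorem coeff_mk_one_pow (s t : ℕ) :
    coeff t ((PowerSeries.mk 1 : R⟦X⟧) ^ s) = (s.multichoose t : R) := by
  cases s with
  | zero => cases t <;> simp [coeff_one]
  | succ s =>
    rw [mk_one_pow_eq_mk_choose_add, coeff_mk, Nat.multichoose_eq, Nat.succ_add_sub_one,
      Nat.choose_symm_add]

variable (R) in
/-- The Catalan series at `X / (1 - X)`. The summands with `y.1 = r` in `hCount_eq_sum` contribute
`X ^ r * catalanGeomSeries R ^ r` to the generating function `hSeries R`. -/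
noncomputable def catalanGeomSeries : R⟦X⟧ :=
  (PowerSeries.map (Nat.castRingHom R) catalanSeries).subst (X * PowerSeries.mk 1 : R⟦X⟧)

theorem coeff_catalanGeomSeries_pow (r n : ℕ) : coeff n (catalanGeomSeries R ^ r) =
    ∑ x ∈ antidiagonal n, (ballot r x.1 * x.1.multichoose x.2 : R) := by
  simp [catalanGeomSeries, ← subst_pow (hasSubst_X_mul _), coeff_subst_X_mul, ← map_pow, ballot,
    coeff_mk_one_pow]

theorem catalanGeomSeries_eq :
    (1 - X) * catalanGeomSeries R = 1 - X + X * catalanGeomSeries R ^ 2 := by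
  have h_subst : HasSubst (X * PowerSeries.mk 1 : R⟦X⟧) := hasSubst_X_mul _
  have h_def : substAlgHom h_subst (PowerSeries.map (Nat.castRingHom R) catalanSeries) =
      catalanGeomSeries R := congrFun (coe_substAlgHom h_subst) _
  have h_catalan := congrArg (substAlgHom h_subst ∘ PowerSeries.map (Nat.castRingHom R))
    catalanSeries_sq_mul_X_add_one
  simp only [comp_apply, map_add, map_mul, map_pow, map_one, PowerSeries.map_X, substAlgHom_X,
    h_def] at h_catalan
  linear_combination (X - 1) * h_catalan +
    X * catalanGeomSeries R ^ 2 * mk_one_mul_one_sub_eq_one R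

variable (R) in
/-- The generating function of the permutations avoiding 4213, 2413 and 2143. -/
noncomputable def hSeries : R⟦X⟧ := PowerSeries.mk fun n => (hCount n : R)

theorem coeff_subst_X_mul_catalanGeomSeries (f : R⟦X⟧) (n : ℕ) :
    coeff n (f.subst (X * catalanGeomSeries R)) = ∑ x ∈ antidiagonal n, ∑ y ∈ antidiagonal x.1,
      coeff y.1 f * (ballot y.1 y.2 * y.2.multichoose x.2) := by
  rw [sum_antidiagonal_assoc n fun r s t => coeff r f * (ballot r s * s.multichoose t : R)]
  simp only [coeff_subst_X_mul, coeff_catalanGeomSeries_pow, mul_sum]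

theorem hSeries_eq_subst :
    hSeries R = (PowerSeries.mk 1 : R⟦X⟧).subst (X * catalanGeomSeries R) := by
  ext n
  simp [hSeries, coeff_subst_X_mul_catalanGeomSeries, hCount_eq_sum]

theorem coeff_hSeries_sq (n : ℕ) :
    coeff n (hSeries R ^ 2) = ∑ x ∈ antidiagonal n, ∑ y ∈ antidiagonal x.1,
      ((y.1 + 1) * (ballot y.1 y.2 * y.2.multichoose x.2) : R) := by
  simp [hSeries_eq_subst, ← subst_pow (hasSubst_X_mul _), coeff_subst_X_mul_catalanGeomSeries,
    mk_one_pow_eq_mk_choose_add R 1, add_comm]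

theorem hSeries_mul_one_sub : hSeries R * (1 - X * catalanGeomSeries R) = 1 := by
  have h := congrArg (substAlgHom (hasSubst_X_mul (catalanGeomSeries R)))
    (mk_one_mul_one_sub_eq_one R)
  rwa [map_mul, map_sub, map_one, substAlgHom_X, coe_substAlgHom, ← hSeries_eq_subst] at h

theorem two_sub_X_mul_hSeries : (2 - X) * hSeries R = 1 + catalanGeomSeries R := by
  linear_combination (1 + catalanGeomSeries R) * hSeries_mul_one_sub (R := R) -
    hSeries R * catalanGeomSeries_eq (R := R)

theorem one_add_X_mul_hSeries :
    (1 + X) * hSeries R = 1 + X * (2 - X) * hSeries R ^ 2 := by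
  linear_combination hSeries_mul_one_sub (R := R) - X * hSeries R * two_sub_X_mul_hSeries (R := R)

end Series

section Recurrence

variable {R : Type*} [CommRing R]

theorem coeff_one_catalanGeomSeries : coeff 1 (catalanGeomSeries R) = 1 := by
  simpa [ballot, Nat.antidiagonal_succ] using coeff_catalanGeomSeries_pow (R := R) 1 1

theorem derivative_X_mul_catalanGeomSeries :
    (1 - 6 * X + 5 * X ^ 2) * d⁄dX R (X * catalanGeomSeries R) =
      (5 * X - 3) * (X * catalanGeomSeries R) + 1 - X := by
  set E := X * catalanGeomSeries R
  have h_E : (1 - X) * E = (1 - X) * X + E * E := by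
    linear_combination X * catalanGeomSeries_eq (R := R)
  have h_deriv := congrArg (d⁄dX R) h_E
  simp only [map_add, map_sub, Derivation.leibniz, derivative_X, Derivation.map_one_eq_zero,
    smul_eq_mul] at h_deriv
  -- `(1 - X - 2 * E) ^ 2` is the discriminant `1 - 6 * X + 5 * X ^ 2` of the quadratic for `E`.
  linear_combination (1 - X - 2 * E) * h_deriv + (2 + 4 * d⁄dX R E) * h_E

theorem coeff_catalanGeomSeries_rec (n : ℕ) :
    (n + 3) * coeff (n + 2) (catalanGeomSeries R) =
      (6 * n + 9) * coeff (n + 1) (catalanGeomSeries R) -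
        5 * n * coeff n (catalanGeomSeries R) := by
  set E' := d⁄dX R (X * catalanGeomSeries R) with hE'
  have h : E' = X * (6 • E') - X * (X * (5 • E')) + X * (X * (5 • catalanGeomSeries R)) -
      X * (3 • catalanGeomSeries R) + (1 - X) := by
    linear_combination derivative_X_mul_catalanGeomSeries (R := R)
  have h_coeff := congrArg (coeff (n + 2)) h
  simp only [hE', map_add, map_sub, coeff_succ_X_mul, map_nsmul, coeff_derivative, coeff_one,
    coeff_X] at h_coeff
  push_cast [nsmul_eq_mul] at h_coeff
  norm_num at h_coeff
  linear_combination h_coeff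

end Recurrence

/-! ### Asymptotics -/

theorem coeff_catalanGeomSeries_bounds (n : ℕ) :
    0 < coeff (n + 1) (catalanGeomSeries ℝ) ∧
      coeff (n + 2) (catalanGeomSeries ℝ) ≤ 5 * coeff (n + 1) (catalanGeomSeries ℝ) ∧
      (5 * n + 3) * coeff (n + 1) (catalanGeomSeries ℝ) ≤
        (n + 3) * coeff (n + 2) (catalanGeomSeries ℝ) := by
  induction n with
  | zero =>
    have h_two := coeff_catalanGeomSeries_rec (R := ℝ) 0
    norm_num [coeff_one_catalanGeomSeries] at h_two ⊢
    constructor <;> linarith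
  | succ n ih =>
    obtain ⟨h_pos, h_upper, h_lower⟩ := ih
    have h_rec := coeff_catalanGeomSeries_rec (R := ℝ) (n + 1)
    push_cast at h_rec ⊢
    have h_pos_succ : 0 < coeff (n + 2) (catalanGeomSeries ℝ) :=
      pos_of_mul_pos_right ((by positivity : (0 : ℝ) < _).trans_le h_lower) (by positivity)
    refine ⟨h_pos_succ, ?_, ?_⟩ <;> nlinarith

theorem tendsto_coeff_catalanGeomSeries_div_succ :
    Tendsto (fun n => coeff (n + 1) (catalanGeomSeries ℝ) / coeff (n + 2) (catalanGeomSeries ℝ))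
      atTop (𝓝 (1 / 5)) := by
  have h_upper : Tendsto (fun n : ℕ => ((n : ℝ) + 3) / (5 * n + 3)) atTop (𝓝 (1 / 5)) := by
    simpa [add_comm] using tendsto_add_mul_div_add_mul_atTop_nhds (3 : ℝ) 3 1 (d := 5) (by norm_num)
  refine tendsto_of_tendsto_of_tendsto_of_le_of_le tendsto_const_nhds h_upper
    (fun n => ?_) fun n => ?_
  all_goals
    obtain ⟨-, h_le, h_ge⟩ := coeff_catalanGeomSeries_bounds n
    have h_pos := (coeff_catalanGeomSeries_bounds (n + 1)).1
  · rw [le_div_iff₀ h_pos]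
    linarith
  · rw [div_le_div_iff₀ h_pos (by positivity)]
    linarith

theorem tendsto_div_of_tendsto_sub_div_sub {u v : ℕ → ℝ} {l : ℝ} (hv : StrictMono v)
    (hv_top : Tendsto v atTop atTop)
    (h : Tendsto (fun n => (u (n + 1) - u n) / (v (n + 1) - v n)) atTop (𝓝 l)) :
    Tendsto (fun n => u n / v n) atTop (𝓝 l) := by
  have h_pos (n : ℕ) : 0 < v (n + 1) - v n := sub_pos.2 (hv n.lt_succ_self)
  have h_step : (fun n => u (n + 1) - l * v (n + 1) - (u n - l * v n)) =o[atTop]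
      fun n => v (n + 1) - v n := by
    refine (isLittleO_iff_tendsto fun n hn => absurd hn (h_pos n).ne').2 ?_
    refine (sub_self l ▸ h.sub_const l).congr fun n => ?_
    have := (h_pos n).ne'
    field_simp
    ring
  have h_sum := h_step.sum_range (fun n => (h_pos n).le) <| by
    simpa only [sum_range_sub, ← sub_eq_add_neg] using
      tendsto_atTop_add_const_right atTop (-v 0) hv_top
  simp only [sum_range_sub (fun n => u n - l * v n), sum_range_sub v] at h_sum
  have h_const (c : ℝ) : (fun _ => c) =o[atTop] v :=
    isLittleO_const_left.2 (.inr (tendsto_norm_atTop_atTop.comp hv_top))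
  have h_diff : (fun n => u n - l * v n) =o[atTop] v :=
    ((h_sum.trans_isBigO ((isBigO_refl v atTop).sub (h_const _).isBigO)).add
      (h_const (u 0 - l * v 0))).congr_left fun n => sub_add_cancel ..
  refine (zero_add l ▸ h_diff.tendsto_div_nhds_zero.add_const l).congr' ?_
  filter_upwards [hv_top.eventually_gt_atTop 0] with n hn
  rw [sub_div, mul_div_cancel_right₀ _ hn.ne', sub_add_cancel]

theorem hCount_zero : hCount 0 = 1 := by
  simp [hCount_eq_sum, ballot]

theorem two_mul_hCount_succ (n : ℕ) :
    (2 * hCount (n + 1) : ℝ) = hCount n + coeff (n + 1) (catalanGeomSeries ℝ) := by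
  have h : hSeries ℝ + hSeries ℝ = X * hSeries ℝ + (1 + catalanGeomSeries ℝ) := by
    linear_combination two_sub_X_mul_hSeries (R := ℝ)
  simpa [coeff_one, hSeries, two_mul] using congrArg (coeff (n + 1)) h

theorem hCount_pos (n : ℕ) : 0 < hCount n := by
  induction n with
  | zero => simp [hCount_zero]
  | succ n ih =>
    have h_pos := (coeff_catalanGeomSeries_bounds n).1
    have h_succ := two_mul_hCount_succ n
    rify at ih ⊢
    linarith

theorem hCount_le_coeff_catalanGeomSeries (n : ℕ) :
    (hCount n : ℝ) ≤ coeff (n + 1) (catalanGeomSeries ℝ) := by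
  induction n with
  | zero => simp [hCount_zero, coeff_one_catalanGeomSeries]
  | succ n ih =>
    obtain ⟨h_pos, -, h_lower⟩ := coeff_catalanGeomSeries_bounds n
    have h_mono : coeff (n + 1) (catalanGeomSeries ℝ) ≤ coeff (n + 2) (catalanGeomSeries ℝ) := by
      refine le_of_mul_le_mul_left (le_trans ?_ h_lower) (by positivity)
      gcongr
      linarith
    linarith [two_mul_hCount_succ n]

theorem hCount_le_succ (n : ℕ) : hCount n ≤ hCount (n + 1) := by
  rify
  linarith [two_mul_hCount_succ n, hCount_le_coeff_catalanGeomSeries n]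

theorem tendsto_hCount_div_succ :
    Tendsto (fun n => (hCount n : ℝ) / hCount (n + 1)) atTop (𝓝 (1 / 5)) := by
  set u : ℕ → ℝ := fun n => 2 ^ n * hCount n with hu
  have h_sub (n : ℕ) : u (n + 1) - u n = 2 ^ n * coeff (n + 1) (catalanGeomSeries ℝ) := by
    rw [hu]
    linear_combination 2 ^ n * two_mul_hCount_succ n
  have h_mono : StrictMono u := strictMono_nat_of_lt_succ fun n => sub_pos.1 <| by
    rw [h_sub]
    exact mul_pos (by positivity) (coeff_catalanGeomSeries_bounds n).1
  have h_top : Tendsto u atTop atTop := by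
    refine tendsto_atTop_mono (fun n => ?_) (tendsto_pow_atTop_atTop_of_one_lt one_lt_two)
    exact le_mul_of_one_le_right (by positivity) (by exact_mod_cast hCount_pos n)
  have h_ratio : Tendsto (fun n => u n / u (n + 1)) atTop (𝓝 (1 / 2 * (1 / 5))) := by
    refine tendsto_div_of_tendsto_sub_div_sub (h_mono.comp (strictMono_id.add_const 1))
      ((tendsto_add_atTop_iff_nat 1).2 h_top) ?_
    refine (tendsto_coeff_catalanGeomSeries_div_succ.const_mul _).congr fun n => ?_
    simp only [h_sub, pow_succ]
    field_simp
  have h_two := h_ratio.const_mul 2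
  norm_num only at h_two
  refine h_two.congr fun n => ?_
  simp only [hu, pow_succ]
  field_simp

theorem two_mul_coeff_hSeries_sq_succ (n : ℕ) : 2 * coeff (n + 1) (hSeries ℝ ^ 2) =
    (hCount (n + 2) : ℝ) + hCount (n + 1) + coeff n (hSeries ℝ ^ 2) := by
  have h : X * (hSeries ℝ ^ 2 + hSeries ℝ ^ 2) =
      hSeries ℝ + X * hSeries ℝ + X * (X * hSeries ℝ ^ 2) - 1 := by
    linear_combination -one_add_X_mul_hSeries (R := ℝ)
  simpa [coeff_one, hSeries, two_mul] using congrArg (coeff (n + 2)) h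

theorem coeff_hSeries_sq_nonneg (n : ℕ) : 0 ≤ coeff n (hSeries ℝ ^ 2) := by
  rw [coeff_hSeries_sq]
  positivity

theorem coeff_hSeries_sq_le (n : ℕ) : coeff n (hSeries ℝ ^ 2) ≤ (2 * hCount (n + 1) : ℝ) := by
  induction n with
  | zero =>
    have h_one : (1 : ℝ) ≤ hCount 1 := mod_cast hCount_pos 1
    have h_zero : coeff 0 (hSeries ℝ ^ 2) = 1 := by simp [coeff_hSeries_sq, ballot]
    linarith
  | succ n ih =>
    have h_le : (hCount (n + 1) : ℝ) ≤ hCount (n + 2) := mod_cast hCount_le_succ (n + 1)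
    linarith [two_mul_coeff_hSeries_sq_succ n]

theorem tendsto_coeff_hSeries_sq_div :
    Tendsto (fun n => coeff n (hSeries ℝ ^ 2) / ((n + 1) * hCount (n + 1) : ℝ)) atTop (𝓝 0) := by
  have h_upper : Tendsto (fun n : ℕ => 2 / ((n : ℝ) + 1)) atTop (𝓝 0) :=
    tendsto_const_nhds.div_atTop (tendsto_natCast_atTop_atTop.atTop_add tendsto_const_nhds)
  refine squeeze_zero (fun n => div_nonneg (coeff_hSeries_sq_nonneg n) (by positivity))
    (fun n => ?_) h_upper
  have h_pos : (0 : ℝ) < hCount (n + 1) := mod_cast hCount_pos (n + 1)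
  rw [div_le_div_iff₀ (by positivity) (by positivity)]
  nlinarith [mul_le_mul_of_nonneg_right (coeff_hSeries_sq_le n) (by positivity : 0 ≤ (n : ℝ) + 1)]

open scoped Classical in
theorem sum_topPts_div (n : ℕ) :
    (∑ σ : Perm (Fin (n + 1)) with AvoidsH σ, (topPts σ : ℝ)) / ((n + 1) * hCount (n + 1)) =
      (hCount n : ℝ) / hCount (n + 1) - coeff n (hSeries ℝ ^ 2) / ((n + 1) * hCount (n + 1)) := by
  have h_sum := congrArg (Nat.cast (R := ℝ)) (sum_topPts_succ_add n)
  push_cast at h_sum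
  rw [← coeff_hSeries_sq] at h_sum
  have h_pos : (0 : ℝ) < hCount (n + 1) := mod_cast hCount_pos (n + 1)
  field_simp
  linarith

open scoped Classical in
theorem topPts_mean :
    Tendsto (fun n : ℕ =>
        (∑ σ : Equiv.Perm (Fin n), if AvoidsH σ then (topPts σ : ℝ) else 0)
          / ((n : ℝ) * (hCount n : ℝ)))
      atTop (nhds (1 / 5)) := by
  rw [← tendsto_add_atTop_iff_nat 1]
  have h := tendsto_hCount_div_succ.sub tendsto_coeff_hSeries_sq_div
  rw [sub_zero] at h
  refine h.congr fun n => ?_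
  rw [← sum_topPts_div, ← sum_filter, Nat.cast_succ]
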